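/- There is an absolute constant C > 0 such that the following holds. Let G be an abelian group, let A ⊆ G be a finite set with |A| ≥ 2, let B ⊆ G be a finite set, and let K ≥ 1 be a real number with |B + A| ≤ K|A|. Then there is a finite set L ⊆ G such that B ⊆ Span(L) and |L| ≤ C·K·log|A|. -/

import Mathlib

open Pointwise

/-- The span of a finite set `L`: all sums `∑_{x ∈ L} σ_x • x` with `σ_x ∈ {-1,0,1}`. -/
def Span {G : Type*} [AddCommGroup G] (L : Finset G) : Set G :=
  {y | ∃ σ : G → ℤ, (∀ x, σ x = -1 ∨ σ x = 0 ∨ σ x = 1) ∧ y = ∑ x ∈ L, σ x • x}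

section Span

variable {G : Type*} [AddCommGroup G] [DecidableEq G]

theorem sum_sub_sum_mem_Span {L t u : Finset G} (ht : t ⊆ L) (hu : u ⊆ L) :
    (∑ x ∈ t, x) - ∑ x ∈ u, x ∈ Span L := by
  refine ⟨fun x => (if x ∈ t then 1 else 0) - (if x ∈ u then 1 else 0), fun x => ?_, ?_⟩
  · by_cases x ∈ t <;> by_cases x ∈ u <;> simp [*]
  · simp [sub_smul, ite_smul, Finset.inter_eq_right.2 ht, Finset.inter_eq_right.2 hu]

theorem mem_Span_of_not_addDissociated_insert {L : Finset G} {b : G}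
    (hL : AddDissociated (L : Set G))
    (hb : ¬ AddDissociated ((insert b L : Finset G) : Set G)) : b ∈ Span L := by
  obtain ⟨t, u, ht, hu, hdisj, hne, hsum⟩ := not_addDissociated_iff_exists_disjoint.1 hb
  rw [Finset.coe_subset] at ht hu
  wlog hbt : b ∈ t generalizing t u
  · by_cases hbu : b ∈ u
    · exact this u t hu ht hdisj.symm hne.symm hsum.symm hbu
    · rw [Finset.subset_insert_iff_of_notMem hbt] at ht
      rw [Finset.subset_insert_iff_of_notMem hbu] at hu
      exact absurd (hL (Finset.coe_subset.2 ht) (Finset.coe_subset.2 hu) hsum) hne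
  have hbu : b ∉ u := Finset.disjoint_left.1 hdisj hbt
  have heq : b = (∑ x ∈ u, x) - ∑ x ∈ t.erase b, x := by
    rw [← hsum, ← Finset.add_sum_erase t (fun x => x) hbt, add_sub_cancel_right]
  rw [heq]
  exact sum_sub_sum_mem_Span ((Finset.subset_insert_iff_of_notMem hbu).1 hu)
    (Finset.subset_insert_iff.1 ht)

/-- A maximal dissociated subset of `B` spans `B`. -/
theorem exists_addDissociated_subset_Span (B : Finset G) :
    ∃ L ⊆ B, AddDissociated (L : Set G) ∧ (B : Set G) ⊆ Span L := by
  classical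
  obtain ⟨L, hL⟩ := (B.powerset.filter fun L : Finset G => AddDissociated (L : Set G)).exists_maximal
    ⟨∅, by simp⟩
  simp only [Finset.mem_filter, Finset.mem_powerset] at hL
  refine ⟨L, hL.1.1, hL.1.2, fun b hb => ?_⟩
  by_cases hbL : b ∈ L
  · simpa using sum_sub_sum_mem_Span (Finset.singleton_subset_iff.2 hbL) (Finset.empty_subset L)
  · exact mem_Span_of_not_addDissociated_insert hL.1.2 fun h =>
      hL.not_gt ⟨Finset.insert_subset hb hL.1.1, h⟩ (Finset.ssubset_insert hbL)

theorem sum_mem_card_nsmul {B t : Finset G} (ht : t ⊆ B) : ∑ x ∈ t, x ∈ t.card • B := by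
  induction t using Finset.induction_on with
  | empty => simp
  | insert a t ha ih =>
    rw [Finset.sum_insert ha, Finset.card_insert_of_notMem ha, succ_nsmul']
    exact Finset.add_mem_add (ht (Finset.mem_insert_self a t))
      (ih ((Finset.subset_insert a t).trans ht))

theorem AddDissociated.choose_card_le_card_nsmul {L B : Finset G}
    (hL : AddDissociated (L : Set G)) (hLB : L ⊆ B) (p : ℕ) :
    L.card.choose p ≤ (p • B).card := by
  rw [← Finset.card_powersetCard]
  refine Finset.card_le_card_of_injOn (fun t => ∑ x ∈ t, x) (fun t ht => ?_)
    (hL.mono fun t ht => ?_)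
  · obtain ⟨htL, rfl⟩ := Finset.mem_powersetCard.1 (Finset.mem_coe.1 ht)
    exact sum_mem_card_nsmul (htL.trans hLB)
  · exact Finset.coe_subset.2 (Finset.mem_powersetCard.1 (Finset.mem_coe.1 ht)).1

theorem card_nsmul_le_of_card_add_le {A B : Finset G} {K : ℝ} (hA : A.Nonempty)
    (h : ((B + A).card : ℝ) ≤ K * A.card) (p : ℕ) :
    ((p • B).card : ℝ) ≤ K ^ p * A.card := by
  have hpl : ((p • B).card : ℝ) ≤ ((A + B).card / A.card : ℝ) ^ p * A.card := by
    have := Finset.pluennecke_ruzsa_inequality_nsmul_add hA B p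
    rw [← NNRat.cast_le (K := ℝ)] at this
    simpa using this
  have hK : ((A + B).card / A.card : ℝ) ≤ K := by
    rw [div_le_iff₀ (by exact_mod_cast hA.card_pos), add_comm]
    exact h
  exact hpl.trans (by gcongr)

end Span

theorem Nat.pow_le_pow_self_mul_choose {n k : ℕ} (h : k ≤ n) : n ^ k ≤ k ^ k * n.choose k := by
  induction k generalizing n with
  | zero => simp
  | succ k ih =>
    obtain ⟨n, rfl⟩ : ∃ m, n = m + 1 := ⟨n - 1, by omega⟩
    have hkn : k ≤ n := by omega
    have key : (n + 1) ^ k ≤ (k + 1) ^ k * n.choose k := by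
      rcases Nat.eq_zero_or_pos k with rfl | hk
      · simp
      refine Nat.le_of_mul_le_mul_left ?_ (pow_pos hk k)
      calc k ^ k * (n + 1) ^ k = (k * (n + 1)) ^ k := (mul_pow _ _ _).symm
        _ ≤ ((k + 1) * n) ^ k := Nat.pow_le_pow_left (by nlinarith) k
        _ = (k + 1) ^ k * n ^ k := mul_pow _ _ _
        _ ≤ (k + 1) ^ k * (k ^ k * n.choose k) := Nat.mul_le_mul_left _ (ih hkn)
        _ = k ^ k * ((k + 1) ^ k * n.choose k) := by ring
    calc (n + 1) ^ (k + 1) = (n + 1) * (n + 1) ^ k := by ring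
      _ ≤ (n + 1) * ((k + 1) ^ k * n.choose k) := Nat.mul_le_mul_left _ key
      _ = (k + 1) ^ k * ((n + 1) * n.choose k) := by ring
      _ = (k + 1) ^ (k + 1) * (n + 1).choose (k + 1) := by
        rw [Nat.add_one_mul_choose_eq]; ring

theorem asymmetric_shkredov :
    ∃ C : ℝ, 0 < C ∧
      ∀ (G : Type) [AddCommGroup G] [DecidableEq G] (A B : Finset G) (K : ℝ),
        2 ≤ A.card → 1 ≤ K → ((B + A).card : ℝ) ≤ K * A.card →
        ∃ L : Finset G,
          (↑B : Set G) ⊆ Span L ∧ (L.card : ℝ) ≤ C * K * Real.log A.card := by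
  refine ⟨9, by norm_num, fun G _ _ A B K hA hK hAB => ?_⟩
  obtain ⟨L, hLB, hL, hspan⟩ := exists_addDissociated_subset_Span B
  refine ⟨L, hspan, ?_⟩
  have hA' : (2 : ℝ) ≤ A.card := by exact_mod_cast hA
  have hlog : 1 / 2 ≤ Real.log A.card :=
    (by linarith [Real.log_two_gt_d9] : 1 / 2 ≤ Real.log 2).trans
      (Real.log_le_log (by norm_num) hA')
  set p := ⌈Real.log A.card⌉₊
  have hp0 : p ≠ 0 := (Nat.ceil_pos.2 (by linarith)).ne'
  have hp_le : (p : ℝ) ≤ 3 * Real.log A.card := by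
    linarith [Nat.ceil_lt_add_one (by linarith : 0 ≤ Real.log A.card)]
  suffices hcard : (L.card : ℝ) ≤ p * K * 3 by nlinarith
  rcases lt_or_ge L.card p with hlt | hge
  · have : (L.card : ℝ) ≤ p := by exact_mod_cast hlt.le
    nlinarith [Nat.cast_nonneg (α := ℝ) p]
  have hA_le : (A.card : ℝ) ≤ 3 ^ p := by
    calc (A.card : ℝ) = Real.exp (Real.log A.card) := (Real.exp_log (by linarith)).symm
      _ ≤ Real.exp p := Real.exp_le_exp.2 (Nat.le_ceil _)
      _ = Real.exp 1 ^ p := by rw [← Real.exp_nat_mul, mul_one]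
      _ ≤ 3 ^ p := by gcongr; exact Real.exp_one_lt_three.le
  refine le_of_pow_le_pow_left₀ hp0 (by positivity) ?_
  calc (L.card : ℝ) ^ p ≤ p ^ p * L.card.choose p := by
        exact_mod_cast Nat.pow_le_pow_self_mul_choose hge
    _ ≤ p ^ p * (p • B).card := by
        gcongr
        exact hL.choose_card_le_card_nsmul hLB p
    _ ≤ p ^ p * (K ^ p * A.card) := by
        gcongr
        exact card_nsmul_le_of_card_add_le (Finset.card_pos.1 (by omega)) hAB p
    _ ≤ p ^ p * (K ^ p * 3 ^ p) := by gcongr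
    _ = (p * K * 3) ^ p := by rw [mul_pow, mul_pow, mul_assoc]
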